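/- Let (V, c) be a finite-dimensional braided vector space that is left triangular with respect to the totally ordered basis X, with diagonal coefficients γ_{x,y}, and let r be an admissible endomorphism of V⊗V that is moreover diagonal with respect to X (i.e., r(x⊗y) ∈ k·(y⊗x) for all x, y ∈ X). Then for all words u, v in letters from X: c_{l(u),l(v)}([u]_r ⊗ [v]_r) − γ_{u,v}·([v]_r ⊗ [u]_r) lies in k{z : z a word with l(z) = l(v) and z > v lexicographically} ⊗ V^{⊗l(u)}. -/

import Mathlib

/-!
We identify the finite-dimensional vector space `V` with basis `X` with the free
`k`-module on `X`, and the tensor power `V^{⊗n}` with the free `k`-module on the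
words of length `n` in letters from `X`; correspondingly `V^{⊗n} ⊗ V^{⊗m}` is the
free `k`-module on pairs of words.  A linear endomorphism `c` of `V ⊗ V` is encoded
by its matrix `c : X → X → ((X × X) →₀ k)`, via `c(x ⊗ y) = Σ_{(z,w)} c x y (z,w) • z ⊗ w`.
-/

variable {k : Type*} [Field k] {X : Type*} [Fintype X] [LinearOrder X]

/-- The maps `c_{1,m} : V ⊗ V^{⊗m} → V^{⊗m} ⊗ V`, defined on basis vectors by
`c_{1,0} = id` and `c_{1,m+1} = (id_V ⊗ c_{1,m}) ∘ (c ⊗ id_{V^{⊗m}})`. -/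
noncomputable def braidOne (c : X → X → ((X × X) →₀ k)) :
    X → List X → ((List X × List X) →₀ k)
  | x, [] => Finsupp.single ([], [x]) 1
  | x, y :: v =>
      (c x y).sum fun p a =>
        a • Finsupp.mapDomain (fun q : List X × List X => (p.1 :: q.1, q.2))
          (braidOne c p.2 v)

/-- Auxiliary version of `c_{n,m}` where the first word is given reversed:
`c_{0,m} = id` and `c_{n+1,m} = (c_{n,m} ⊗ id_V) ∘ (id_{V^{⊗n}} ⊗ c_{1,m})`. -/
noncomputable def braidRev (c : X → X → ((X × X) →₀ k)) :
    List X → List X → ((List X × List X) →₀ k)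
  | [], v => Finsupp.single (v, []) 1
  | x :: urev, v =>
      (braidOne c x v).sum fun p a =>
        a • Finsupp.mapDomain (fun q : List X × List X => (q.1, q.2 ++ p.2))
          (braidRev c urev p.1)

/-- The braiding maps `c_{n,m} : V^{⊗n} ⊗ V^{⊗m} → V^{⊗m} ⊗ V^{⊗n}` on basis vectors:
`braidWords c u v` is `c_{l(u),l(v)}(u ⊗ v)`. -/
noncomputable def braidWords (c : X → X → ((X × X) →₀ k)) (u v : List X) :
    (List X × List X) →₀ k :=
  braidRev c u.reverse v

/-- `c` is left triangular with respect to the ordered basis `X`: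
`c(x ⊗ y) = γ_{x,y} • y ⊗ x + Σ_{z > y} z ⊗ v_{x,y,z}`, i.e. the coefficient of
`c(x ⊗ y)` at `z ⊗ w` vanishes unless `(z, w) = (y, x)` or `z > y`. -/
def LeftTriangularMat (c : X → X → ((X × X) →₀ k)) : Prop :=
  ∀ (x y : X) (zw : X × X), c x y zw ≠ 0 → (zw.1 = y ∧ zw.2 = x) ∨ y < zw.1

/-- `c ⊗ id` acting on `V ⊗ V ⊗ V` (matrix form). -/
noncomputable def act12 (c : X → X → ((X × X) →₀ k)) (f : (X × X × X) →₀ k) :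
    (X × X × X) →₀ k :=
  f.sum fun t a => a • ((c t.1 t.2.1).sum fun p b => Finsupp.single (p.1, p.2, t.2.2) b)

/-- `id ⊗ c` acting on `V ⊗ V ⊗ V` (matrix form). -/
noncomputable def act23 (c : X → X → ((X × X) →₀ k)) (f : (X × X × X) →₀ k) :
    (X × X × X) →₀ k :=
  f.sum fun t a => a • ((c t.2.1 t.2.2).sum fun p b => Finsupp.single (t.1, p.1, p.2) b)

/-- `c` satisfies the braid equation
`(c ⊗ id)(id ⊗ c)(c ⊗ id) = (id ⊗ c)(c ⊗ id)(id ⊗ c)`. -/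
def SatisfiesBraidEq (c : X → X → ((X × X) →₀ k)) : Prop :=
  ∀ f : (X × X × X) →₀ k,
    act12 c (act23 c (act12 c f)) = act23 c (act12 c (act23 c f))

/-- The linear extension of `c` to an endomorphism of `V ⊗ V`. -/
noncomputable def extendMat (c : X → X → ((X × X) →₀ k)) (f : (X × X) →₀ k) :
    (X × X) →₀ k :=
  f.sum fun p a => a • c p.1 p.2

/-- The coefficient `γ_{u,v} = Π_{x ∈ u} Π_{y ∈ v} γ x y`. -/
def gammaWords (γ : X → X → k) (u v : List X) : k :=
  (u.map fun x => (v.map fun y => γ x y).prod).prod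

/-- A word `u` is a Lyndon word if it is nonempty and lexicographically smaller than
each of its proper nonempty suffixes. -/
def IsLyndon {X : Type*} [LinearOrder X] (u : List X) : Prop :=
  u ≠ [] ∧ ∀ v w : List X, v ≠ [] → w ≠ [] → u = v ++ w → List.Lex (· < ·) u w

/-- `ls` is a Lyndon factorization of `u`: all factors are Lyndon words, the factors are
(lexicographically) nonincreasing, and their concatenation is `u`. -/
def IsLyndonFactorization {X : Type*} [LinearOrder X] (ls : List (List X)) (u : List X) : Prop :=
  (∀ l ∈ ls, IsLyndon l) ∧ ls.Chain' (fun a b => ¬ List.Lex (· < ·) a b) ∧ ls.flatten = u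

/-- `u = v ++ w` is the Shirshov decomposition of the Lyndon word `u`:
`w` is the longest proper nonempty suffix of `u` that is a Lyndon word. -/
def ShirshovSplit {X : Type*} [LinearOrder X] (u v w : List X) : Prop :=
  v ≠ [] ∧ w ≠ [] ∧ u = v ++ w ∧ IsLyndon w ∧
    ∀ w' : List X, w' ≠ [] → IsLyndon w' →
      (∃ v' : List X, v' ≠ [] ∧ u = v' ++ w') → w'.length ≤ w.length

/-- The multiplication `V^{⊗n} ⊗ V^{⊗m} → V^{⊗(n+m)}` of the tensor algebra,
in the word model: concatenation of the two components. -/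
noncomputable def mulWords {k : Type*} [Field k] {X : Type*} :
    ((List X × List X) →₀ k) → ((List X) →₀ k) :=
  Finsupp.mapDomain fun p : List X × List X => p.1 ++ p.2

/-- The tensor product of two elements of the tensor algebra, in the word model. -/
noncomputable def tensWords {k : Type*} [Field k] {X : Type*}
    (f g : (List X) →₀ k) : (List X × List X) →₀ k :=
  f.sum fun u a => g.sum fun v b => Finsupp.single (u, v) (a * b)

/-- The linear extension of the braiding maps `c_{n,m}` to all of `T(V) ⊗ T(V)`
(applied degreewise), in the word model. -/
noncomputable def braidExt {k : Type*} [Field k] {X : Type*} [Fintype X] [LinearOrder X]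
    (c : X → X → ((X × X) →₀ k)) (f : (List X × List X) →₀ k) :
    (List X × List X) →₀ k :=
  f.sum fun p a => a • braidWords c p.1 p.2

/-- `br` is the iterated-commutator map `u ↦ [u]_r` associated to the endomorphism `r`:
it satisfies the defining recursion of `[-]_r`. -/
def IsBracketing {k : Type*} [Field k] {X : Type*} [Fintype X] [LinearOrder X]
    (r : X → X → ((X × X) →₀ k)) (br : List X → ((List X) →₀ k)) : Prop :=
  br [] = Finsupp.single [] 1 ∧
  (∀ x : X, br [x] = Finsupp.single [x] 1) ∧
  (∀ u v w : List X, IsLyndon u → ShirshovSplit u v w →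
    br u = mulWords (tensWords (br v) (br w))
      - mulWords (braidExt r (tensWords (br v) (br w)))) ∧
  (∀ (l : List X) (ls : List (List X)) (u : List X), ls ≠ [] →
    IsLyndonFactorization (l :: ls) u →
    br u = mulWords (tensWords (br l) (br ls.flatten)))

section ListLex

variable {X : Type*} [LinearOrder X]

theorem append_lt_append_of_length_eq {a a' : List X} (b b' : List X)
    (hlen : a.length = a'.length) (h : a < a') : a ++ b < a' ++ b' := by
  induction a generalizing a' with
  | nil => cases a' <;> simp_all
  | cons x a ih =>
    cases a' with
    | nil => simp at hlen
    | cons x' a' =>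
      simp only [List.length_cons, Nat.add_right_cancel_iff] at hlen
      simp only [List.cons_append, List.cons_lt_cons_iff] at h ⊢
      exact h.imp id fun h => ⟨h.1, ih hlen h.2⟩

theorem append_lt_append_iff_left {a b b' : List X} : a ++ b < a ++ b' ↔ b < b' := by
  induction a with
  | nil => rfl
  | cons x a ih => simp [ih]

theorem append_le_append_of_length_eq {a a' b b' : List X}
    (hlen : a.length = a'.length) (ha : a ≤ a') (hb : b ≤ b') : a ++ b ≤ a' ++ b' := by
  rcases ha.lt_or_eq with h | rfl
  · exact (append_lt_append_of_length_eq b b' hlen h).le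
  · exact le_of_not_gt fun h => hb.not_gt (append_lt_append_iff_left.1 h)

theorem le_append_right (a b : List X) : a ≤ a ++ b := by
  refine le_of_not_gt fun h => ?_
  rw [← List.append_nil a, List.append_assoc, append_lt_append_iff_left] at h
  exact List.not_lt_nil _ h

/-- A word lying strictly between `a` and `a ++ b` has `a` as a prefix. -/
theorem exists_eq_append_of_lt_of_lt {a b w : List X} (h₁ : a < w) (h₂ : w < a ++ b) :
    ∃ t, w = a ++ t := by
  induction a generalizing w with
  | nil => exact ⟨w, rfl⟩
  | cons x a ih =>
    cases w with
    | nil => simp at h₁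
    | cons y w =>
      simp only [List.cons_append, List.cons_lt_cons_iff] at h₁ h₂
      rcases h₁ with h₁ | ⟨rfl, h₁⟩
      · rcases h₂ with h₂ | ⟨rfl, -⟩
        · exact absurd h₂ h₁.asymm
        · exact absurd h₁ (lt_irrefl _)
      · rcases h₂ with h₂ | ⟨-, h₂⟩
        · exact absurd h₂ (lt_irrefl _)
        · obtain ⟨t, rfl⟩ := ih h₁ h₂
          exact ⟨t, rfl⟩

end ListLex

section Lyndon

variable {X : Type*} [LinearOrder X]

theorem isLyndon_singleton (x : X) : IsLyndon [x] := by
  refine ⟨by simp, fun v w hv hw h => ?_⟩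
  have := congrArg List.length h
  have := List.length_pos_iff.2 hv
  have := List.length_pos_iff.2 hw
  simp at *
  omega

theorem exists_min_suffix {u : List X} (hu : u ≠ []) :
    ∃ w, w ≠ [] ∧ w <:+ u ∧ ∀ s, s ≠ [] → s <:+ u → w ≤ s := by
  classical
  obtain ⟨w, hw, hmin⟩ := Finset.exists_min_image (u.tails.toFinset.filter (· ≠ [])) id
    ⟨u, by simpa using hu⟩
  simp only [ne_eq, Finset.mem_filter, List.mem_toFinset, List.mem_tails, id, and_imp] at hw hmin
  exact ⟨w, hw.2, hw.1, fun s hs hsu => hmin s hsu hs⟩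

/-- Every word has a Lyndon decomposition. -/
theorem exists_isLyndonFactorization (u : List X) : ∃ ls, IsLyndonFactorization ls u := by
  induction hn : u.length using Nat.strong_induction_on generalizing u with
  | _ n ih =>
  subst hn
  by_cases hu : u = []
  · exact ⟨[], by simp, List.isChain_nil, hu.symm⟩
  obtain ⟨w, hw, ⟨u', rfl⟩, hmin⟩ := exists_min_suffix hu
  obtain ⟨ls, hlyn, hchain, hflat⟩ := ih u'.length
    (by simpa using List.length_pos_iff.2 hw) u' rfl
  have hwlyn : IsLyndon w := by
    refine ⟨hw, fun a b ha hb hab => ?_⟩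
    have hle : w ≤ b := hmin b hb ⟨u' ++ a, by simp [hab]⟩
    refine hle.lt_of_ne fun h => ha ?_
    simpa [← h] using hab
  refine ⟨ls ++ [w], ?_, ?_, by simp [hflat]⟩
  · intro l hl
    rcases List.mem_append.1 hl with hl | hl
    · exact hlyn l hl
    · rw [List.mem_singleton.1 hl]
      exact hwlyn
  · refine List.isChain_append.2 ⟨hchain, List.isChain_singleton _, ?_⟩
    rintro l hl _ hw' (hlw : l < _)
    obtain rfl : w = _ := by simpa using hw'
    obtain ⟨ls', rfl⟩ := List.getLast?_eq_some_iff.1 hl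
    have hlne : l ≠ [] := (hlyn l (by simp)).1
    have hlt : w < l ++ w := by
      refine (hmin (l ++ w) (by simp [hw]) ⟨ls'.flatten, by simp [← hflat]⟩).lt_of_ne fun h => hlne ?_
      simpa using h
    obtain ⟨t, rfl⟩ := exists_eq_append_of_lt_of_lt hlw hlt
    have htne : t ≠ [] := by
      rintro rfl
      simp at hlw
    exact (hmin t htne ⟨u' ++ l, by simp⟩).not_gt (append_lt_append_iff_left.1 hlt)

/-- Every word of length at least two has a longest proper nonempty Lyndon suffix. -/
theorem exists_shirshovSplit {u : List X} (hu : 2 ≤ u.length) : ∃ v w, ShirshovSplit u v w := by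
  classical
  have hlast : [u.getLast (List.length_pos_iff.1 (by omega))] ∈
      u.tails.toFinset.filter (fun w => IsLyndon w ∧ w ≠ u) := by
    simp only [Finset.mem_filter, List.mem_toFinset, List.mem_tails]
    refine ⟨⟨u.dropLast, List.dropLast_append_getLast _⟩, isLyndon_singleton _, fun h => ?_⟩
    rw [← h] at hu
    simp at hu
  obtain ⟨w, hw, hmax⟩ := Finset.exists_max_image _ List.length ⟨_, hlast⟩
  simp only [ne_eq, Finset.mem_filter, List.mem_toFinset, List.mem_tails, and_imp] at hw hmax
  obtain ⟨⟨v, rfl⟩, hwlyn, hne⟩ := hw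
  refine ⟨v, w, by simpa using hne, hwlyn.1, rfl, hwlyn, ?_⟩
  rintro w' - hw' ⟨v', hv', h⟩
  refine hmax w' ⟨v', h.symm⟩ hw' fun h' => hv' ?_
  simpa [h'] using h

end Lyndon

section Supported

variable {k : Type*} [Field k] {ι κ M : Type*} [AddCommGroup M] [Module k M]

theorem sum_smul_mem_of_supported {f : ι →₀ k} {S : Set ι} {F : ι → M} {N : Submodule k M}
    (hf : f ∈ Finsupp.supported k k S) (hF : ∀ i ∈ S, F i ∈ N) :
    (f.sum fun i a => a • F i) ∈ N :=
  Submodule.sum_mem _ fun i hi => N.smul_mem _ (hF i (hf hi))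

/-- Triangularity composes: if `f` has leading term `a • i` modulo `S`, and `F` sends `i` to
`b • m` modulo `N` and `S` into `N`, then the linear extension of `F` sends `f` to
`(a * b) • m` modulo `N`. -/
theorem sum_smul_sub_mem {f : ι →₀ k} {S : Set ι} {F : ι → M} {N : Submodule k M}
    {i : ι} {a b : k} {m : M} (hf : f - a • Finsupp.single i 1 ∈ Finsupp.supported k k S)
    (hi : F i - b • m ∈ N) (hF : ∀ j ∈ S, F j ∈ N) :
    (f.sum fun j c => c • F j) - (a * b) • m ∈ N := by
  have h₁ := sum_smul_mem_of_supported hf hF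
  have h₂ := N.add_mem h₁ (N.smul_mem a hi)
  convert h₂ using 1
  change Finsupp.linearCombination k F f - _ = Finsupp.linearCombination k F _ + _
  simp [smul_sub, mul_smul]

theorem mapDomain_mem_supported {f : ι →₀ k} {S : Set ι} {T : Set κ} {g : ι → κ}
    (hf : f ∈ Finsupp.supported k k S) (hg : Set.MapsTo g S T) :
    Finsupp.mapDomain g f ∈ Finsupp.supported k k T := by
  classical
  intro j hj
  obtain ⟨i, hi, rfl⟩ := Finset.mem_image.1 (Finsupp.mapDomain_support hj)
  exact hg (hf hi)

theorem mapDomain_sub_smul_single_mem_supported {f : ι →₀ k} {S : Set ι} {T : Set κ} {g : ι → κ}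
    {i : ι} {a : k} (hf : f - a • Finsupp.single i 1 ∈ Finsupp.supported k k S)
    (hg : Set.MapsTo g S T) :
    Finsupp.mapDomain g f - a • Finsupp.single (g i) 1 ∈ Finsupp.supported k k T := by
  have h := mapDomain_mem_supported hf hg
  change Finsupp.lmapDomain k k g _ ∈ _ at h
  simpa [map_sub] using h

theorem single_mem_supported_of_mem {S : Set ι} {i : ι} (a : k) (hi : i ∈ S) :
    Finsupp.single i a ∈ Finsupp.supported k k S :=
  Finsupp.single_mem_supported k a hi

theorem tensWords_mem_supported {X : Type*} {f g : List X →₀ k} {S T : Set (List X)}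
    (hf : f ∈ Finsupp.supported k k S) (hg : g ∈ Finsupp.supported k k T) :
    tensWords f g ∈ Finsupp.supported k k (S ×ˢ T) :=
  Submodule.sum_mem _ fun _ hi => Submodule.sum_mem _ fun _ hj =>
    single_mem_supported_of_mem _ ⟨hf hi, hg hj⟩

theorem mapDomain_swap_tensWords {X : Type*} (f g : List X →₀ k) :
    Finsupp.mapDomain Prod.swap (tensWords f g) = tensWords g f := by
  unfold tensWords
  rw [Finsupp.sum_comm]
  simp only [Finsupp.sum, Finsupp.mapDomain_finsetSum, Finsupp.mapDomain_single, Prod.swap_prod_mk,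
    mul_comm]

end Supported

section Braiding

variable {k : Type*} [Field k] {X : Type*} [LinearOrder X]

/-- The pairs of words of lengths `v.length` and `n` whose first entry is larger than `v`. -/
def wordsAbove (v : List X) (n : ℕ) : Set (List X × List X) :=
  {p | p.1.length = v.length ∧ v < p.1 ∧ p.2.length = n}

/-- The pairs of words of lengths `v.length` and `n` whose first entry is at least `v`. -/
def wordsAtLeast (v : List X) (n : ℕ) : Set (List X × List X) :=
  {p | p.1.length = v.length ∧ v ≤ p.1 ∧ p.2.length = n}

theorem mem_supported_wordsAtLeast {f : (List X × List X) →₀ k} {a : k} {v w : List X} {n : ℕ}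
    (hw : w.length = n)
    (hf : f - a • Finsupp.single (v, w) 1 ∈ Finsupp.supported k k (wordsAbove v n)) :
    f ∈ Finsupp.supported k k (wordsAtLeast v n) := by
  have h₁ : f - a • Finsupp.single (v, w) 1 ∈ Finsupp.supported k k (wordsAtLeast v n) :=
    Finsupp.supported_mono (fun _ hp => And.intro hp.1 ⟨hp.2.1.le, hp.2.2⟩) hf
  have h₂ : Finsupp.single (v, w) (1 : k) ∈ Finsupp.supported k k (wordsAtLeast v n) :=
    single_mem_supported_of_mem 1 ⟨rfl, le_rfl, hw⟩
  simpa using Submodule.add_mem _ h₁ (Submodule.smul_mem _ a h₂)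

theorem LeftTriangularMat.sub_mem_supported {c : X → X → ((X × X) →₀ k)}
    (hc : LeftTriangularMat c) (x y : X) :
    c x y - c x y (y, x) • Finsupp.single (y, x) 1 ∈
      Finsupp.supported k k {p : X × X | y < p.1} := by
  intro p hp
  by_cases h : p = (y, x)
  · subst h
    simp at hp
  · have hne : c x y p ≠ 0 := by
      simpa [Finsupp.single_apply, Ne.symm h] using hp
    exact (hc x y p hne).resolve_left fun h' => h (Prod.ext h'.1 h'.2)

theorem braidOne_sub_mem_supported {c : X → X → ((X × X) →₀ k)} (hc : LeftTriangularMat c)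
    (x : X) (v : List X) :
    braidOne c x v - (v.map fun y => c x y (y, x)).prod • Finsupp.single (v, [x]) 1 ∈
      Finsupp.supported k k (wordsAbove v 1) := by
  induction v generalizing x with
  | nil => simp [braidOne]
  | cons y v ih =>
    have hlead := mapDomain_sub_smul_single_mem_supported (T := wordsAbove (y :: v) 1)
      (g := fun q : List X × List X => (y :: q.1, q.2)) (ih x) fun q hq =>
      And.intro (by simp [hq.1]) ⟨List.cons_lt_cons_iff.2 (Or.inr ⟨rfl, hq.2.1⟩), hq.2.2⟩
    have hrest : ∀ p ∈ {p : X × X | y < p.1},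
        Finsupp.mapDomain (fun q : List X × List X => (p.1 :: q.1, q.2)) (braidOne c p.2 v) ∈
          Finsupp.supported k k (wordsAbove (y :: v) 1) := fun p hp =>
      mapDomain_mem_supported (mem_supported_wordsAtLeast rfl (ih p.2)) fun q hq =>
        And.intro (by simp [hq.1]) ⟨List.cons_lt_cons_iff.2 (Or.inl hp), hq.2.2⟩
    have h := sum_smul_sub_mem (hc.sub_mem_supported x y) hlead hrest
    rwa [braidOne, List.map_cons, List.prod_cons]

theorem braidRev_sub_mem_supported {c : X → X → ((X × X) →₀ k)} (hc : LeftTriangularMat c)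
    (u v : List X) :
    braidRev c u v -
        gammaWords (fun x y => c x y (y, x)) u v • Finsupp.single (v, u.reverse) 1 ∈
      Finsupp.supported k k (wordsAbove v u.length) := by
  induction u generalizing v with
  | nil => simp [braidRev, gammaWords]
  | cons x u ih =>
    have hlead := mapDomain_sub_smul_single_mem_supported (T := wordsAbove v (u.length + 1))
      (g := fun q : List X × List X => (q.1, q.2 ++ [x])) (ih v) fun q hq =>
      And.intro hq.1 ⟨hq.2.1, by simp [hq.2.2]⟩
    have hrest : ∀ p ∈ wordsAbove v 1,
        Finsupp.mapDomain (fun q : List X × List X => (q.1, q.2 ++ p.2)) (braidRev c u p.1) ∈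
          Finsupp.supported k k (wordsAbove v (u.length + 1)) := fun p hp =>
      mapDomain_mem_supported (mem_supported_wordsAtLeast (by simp) (ih p.1)) fun q hq =>
        And.intro (hq.1.trans hp.1) ⟨hp.2.1.trans_le hq.2.1, by simp [hq.2.2, hp.2.2]⟩
    have h := sum_smul_sub_mem (braidOne_sub_mem_supported hc x v) hlead hrest
    rwa [braidRev, gammaWords, List.map_cons, List.prod_cons, List.reverse_cons]

theorem gammaWords_perm {X : Type*} (γ : X → X → k) {u u' v v' : List X}
    (hu : u'.Perm u) (hv : v'.Perm v) :
    gammaWords γ u' v' = gammaWords γ u v := by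
  unfold gammaWords
  rw [(hu.map _).prod_eq]
  congr 2
  funext x
  exact (hv.map _).prod_eq

/-- The braiding of two words is triangular with diagonal coefficient `γ_{u,v}`. -/
theorem braidWords_sub_mem_supported {c : X → X → ((X × X) →₀ k)} (hc : LeftTriangularMat c)
    (u v : List X) :
    braidWords c u v - gammaWords (fun x y => c x y (y, x)) u v • Finsupp.single (v, u) 1 ∈
      Finsupp.supported k k (wordsAbove v u.length) := by
  have h := braidRev_sub_mem_supported hc u.reverse v
  rwa [List.reverse_reverse, List.length_reverse,
    gammaWords_perm _ u.reverse_perm (List.Perm.refl v)] at h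

theorem braidOne_mem_supported_of_diagonal {X : Type*} {r : X → X → ((X × X) →₀ k)}
    (hr : ∀ (x y : X) (zw : X × X), r x y zw ≠ 0 → zw = (y, x)) (x : X) (v : List X) :
    braidOne r x v ∈ Finsupp.supported k k {(v, [x])} := by
  induction v generalizing x with
  | nil => exact single_mem_supported_of_mem 1 rfl
  | cons y v ih =>
    refine sum_smul_mem_of_supported (S := {(y, x)})
      (fun p hp => hr x y p (Finsupp.mem_support_iff.1 hp)) ?_
    rintro _ rfl
    exact mapDomain_mem_supported (ih x) (by rintro _ rfl; rfl)

theorem braidRev_mem_supported_of_diagonal {X : Type*} {r : X → X → ((X × X) →₀ k)}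
    (hr : ∀ (x y : X) (zw : X × X), r x y zw ≠ 0 → zw = (y, x)) (u v : List X) :
    braidRev r u v ∈ Finsupp.supported k k {(v, u.reverse)} := by
  induction u generalizing v with
  | nil => exact single_mem_supported_of_mem 1 rfl
  | cons x u ih =>
    refine sum_smul_mem_of_supported (braidOne_mem_supported_of_diagonal hr x v) ?_
    rintro _ rfl
    exact mapDomain_mem_supported (ih v) (by rintro _ rfl; simp)

theorem braidWords_mem_supported_of_diagonal {X : Type*} {r : X → X → ((X × X) →₀ k)}
    (hr : ∀ (x y : X) (zw : X × X), r x y zw ≠ 0 → zw = (y, x)) (u v : List X) :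
    braidWords r u v ∈ Finsupp.supported k k {(v, u)} := by
  have h := braidRev_mem_supported_of_diagonal hr u.reverse v
  rwa [List.reverse_reverse] at h

/-- For diagonal `r`, the element `[u]_r` is a combination of rearrangements of `u` that are
lexicographically at least `u`. -/
theorem IsBracketing.mem_supported [Fintype X] {r : X → X → ((X × X) →₀ k)}
    (hr : ∀ (x y : X) (zw : X × X), r x y zw ≠ 0 → zw = (y, x))
    {br : List X → (List X →₀ k)} (hbr : IsBracketing r br) (u : List X) :
    br u ∈ Finsupp.supported k k {u' | u'.Perm u ∧ u ≤ u'} := by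
  obtain ⟨hnil, hsingle, hlyndon, hfact⟩ := hbr
  induction hn : u.length using Nat.strong_induction_on generalizing u with
  | _ n ih =>
  subst hn
  have hmul : ∀ v w : List X, v.length < (v ++ w).length → w.length < (v ++ w).length →
      u = v ++ w → mulWords (tensWords (br v) (br w)) ∈
        Finsupp.supported k k {u' | u'.Perm u ∧ u ≤ u'} := by
    rintro v w hv hw rfl
    refine mapDomain_mem_supported
      (tensWords_mem_supported (ih _ hv v rfl) (ih _ hw w rfl)) ?_
    rintro ⟨v', w'⟩ ⟨⟨hv₁, hv₂⟩, hw₁, hw₂⟩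
    exact ⟨hv₁.append hw₁, append_le_append_of_length_eq hv₁.length_eq.symm hv₂ hw₂⟩
  by_cases hlyn : IsLyndon u
  · rcases Nat.lt_or_ge u.length 2 with hlt | hge
    · obtain ⟨x, rfl⟩ := List.length_eq_one_iff.1
        (le_antisymm (Nat.le_of_lt_succ hlt) (List.length_pos_iff.2 hlyn.1))
      rw [hsingle]
      exact single_mem_supported_of_mem 1 ⟨List.Perm.refl _, le_rfl⟩
    · obtain ⟨v, w, hsplit⟩ := exists_shirshovSplit hge
      rw [hlyndon u v w hlyn hsplit]
      obtain ⟨hv, hw, rfl, -⟩ := hsplit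
      have hvlen : v.length < (v ++ w).length := by simpa using List.length_pos_iff.2 hw
      have hwlen : w.length < (v ++ w).length := by simpa using List.length_pos_iff.2 hv
      have huw : v ++ w < w := hlyn.2 v w hv hw rfl
      refine Submodule.sub_mem _ (hmul v w hvlen hwlen rfl) ?_
      refine mapDomain_mem_supported
        (S := {p | p.1.Perm w ∧ w ≤ p.1 ∧ p.2.Perm v}) (sum_smul_mem_of_supported
          (tensWords_mem_supported (ih _ hvlen v rfl) (ih _ hwlen w rfl)) ?_) ?_
      · rintro ⟨v', w'⟩ ⟨⟨hv₁, -⟩, hw₁, hw₂⟩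
        refine Finsupp.supported_mono ?_ (braidWords_mem_supported_of_diagonal hr v' w')
        rintro _ rfl
        exact ⟨hw₁, hw₂, hv₁⟩
      · rintro ⟨w', v'⟩ ⟨hw₁, hw₂, hv₁⟩
        exact ⟨(hw₁.append hv₁).trans List.perm_append_comm,
          huw.le.trans (hw₂.trans (le_append_right w' v'))⟩
  · obtain ⟨ls, hls⟩ := exists_isLyndonFactorization u
    match ls, hls with
    | [], hls =>
      obtain rfl : u = [] := by simpa using hls.2.2.symm
      rw [hnil]
      exact single_mem_supported_of_mem 1 ⟨List.Perm.refl _, le_rfl⟩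
    | [l], hls =>
      obtain rfl : l = u := by simpa using hls.2.2
      exact absurd (hls.1 l (by simp)) hlyn
    | l :: m :: ls, hls =>
      rw [hfact l (m :: ls) u (by simp) hls]
      have hl := List.length_pos_iff.2 (hls.1 l (by simp)).1
      have hm := List.length_pos_iff.2 (hls.1 m (by simp)).1
      refine hmul l _ ?_ ?_ hls.2.2.symm
      · simp only [List.length_append, List.flatten_cons]
        omega
      · simp only [List.length_append, List.flatten_cons]
        omega

end Braiding

/-- Let `(V, c)` be a finite-dimensional braided vector space, left triangular with
respect to `X` with diagonal coefficients `γ`, and let `r` be an admissible endomorphism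
of `V ⊗ V` that is moreover diagonal with respect to `X`.  Then for all words `u, v`:
`c([u]_r ⊗ [v]_r) ∈ γ_{u,v} • ([v]_r ⊗ [u]_r) + k X^{l(v)}_{> v} ⊗ V^{⊗ l(u)}`. -/
theorem braiding_bracket_triangular
    (c : X → X → ((X × X) →₀ k))
    (hcbij : Function.Bijective (extendMat c))
    (hcbraid : SatisfiesBraidEq c)
    (γ : X → X → k) (hγ : ∀ x y : X, γ x y = c x y (y, x))
    (hctri : LeftTriangularMat c)
    (r : X → X → ((X × X) →₀ k))
    (hrbraid : SatisfiesBraidEq r)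
    (hrtri : LeftTriangularMat r)
    (hrdiag : ∀ (x y : X) (zw : X × X), r x y zw ≠ 0 → zw = (y, x))
    (br : List X → ((List X) →₀ k)) (hbr : IsBracketing r br)
    (u v : List X) :
    braidExt c (tensWords (br u) (br v))
        - gammaWords γ u v • tensWords (br v) (br u) ∈
      Submodule.span k {f : (List X × List X) →₀ k |
        ∃ z w : List X, z.length = v.length ∧ List.Lex (· < ·) v z ∧
          w.length = u.length ∧ f = Finsupp.single (z, w) 1} := by
  have hγ' : γ = fun x y => c x y (y, x) := by
    funext x y
    exact hγ x y
  subst hγ'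
  have hset : {f : (List X × List X) →₀ k |
        ∃ z w : List X, z.length = v.length ∧ List.Lex (· < ·) v z ∧
          w.length = u.length ∧ f = Finsupp.single (z, w) 1} =
      (fun p => Finsupp.single p 1) '' wordsAbove v u.length := by
    ext f
    constructor
    · rintro ⟨z, w, h₁, h₂, h₃, rfl⟩
      exact ⟨(z, w), ⟨h₁, h₂, h₃⟩, rfl⟩
    · rintro ⟨⟨z, w⟩, ⟨h₁, h₂, h₃⟩, rfl⟩
      exact ⟨z, w, h₁, h₂, h₃, rfl⟩
  rw [hset, ← Finsupp.supported_eq_span_single, ← mapDomain_swap_tensWords (br u) (br v)]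
  have h := sum_smul_mem_of_supported
    (F := fun p => braidWords c p.1 p.2 -
      gammaWords (fun x y => c x y (y, x)) u v • Finsupp.single p.swap 1)
    (N := Finsupp.supported k k (wordsAbove v u.length))
    (tensWords_mem_supported (hbr.mem_supported hrdiag u) (hbr.mem_supported hrdiag v)) ?_
  · convert h using 1
    simp only [braidExt, Finsupp.mapDomain, smul_sub, Finsupp.sum_sub, Finsupp.smul_sum]
    congr 1
    refine Finsupp.sum_congr fun p _ => ?_
    simp [mul_comm]
  · rintro ⟨u', v'⟩ ⟨⟨hu₁, -⟩, hv₁, hv₂⟩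
    have h := braidWords_sub_mem_supported hctri u' v'
    rw [gammaWords_perm _ hu₁ hv₁] at h
    refine Finsupp.supported_mono ?_ h
    rintro p ⟨h₁, h₂, h₃⟩
    exact ⟨h₁.trans hv₁.length_eq, lt_of_le_of_lt hv₂ h₂, h₃.trans hu₁.length_eq⟩
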